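/- Let ρ̄ > 0, δ ∈ (0, ρ̄), Γ > 2, and let p : [0, ρ̄) → ℝ be continuously differentiable with p(ρ) ≥ 0 and p'(ρ) > 0 for 0 < ρ < ρ̄, and suppose in addition p(ρ̄ − δ) > 0. Define p_δ : [0, ∞) → ℝ by p_δ(ρ) = p(ρ) + δρ² for 0 ≤ ρ ≤ ρ̄ − δ, and p_δ(ρ) = (ρ − ρ̄ + δ)^Γ + p(ρ̄ − δ) + p'(ρ̄ − δ)(ρ − ρ̄ + δ) + δρ² for ρ > ρ̄ − δ. Then for every ρ ≥ ρ̄ one has ρ ≤ (1/p'(ρ̄ − δ) + ρ̄/p(ρ̄ − δ)) · p_δ(ρ). -/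

import Mathlib

open Set

/-- The approximate pressure `p_δ` of the approximation scheme (A3):
`p_δ(ρ) = p(ρ) + δρ²` for `0 ≤ ρ ≤ R − δ`, and
`p_δ(ρ) = (ρ − R + δ)^Γ + p(R − δ) + p'(R − δ)(ρ − R + δ) + δρ²` for `ρ > R − δ`,
where `R = ρ̄` is the critical density. -/
noncomputable def pdelta (R δ Γ : ℝ) (p p' : ℝ → ℝ) (ρ : ℝ) : ℝ :=
  if ρ ≤ R - δ then p ρ + δ * ρ ^ 2
  else (ρ - R + δ) ^ Γ + p (R - δ) + p' (R - δ) * (ρ - R + δ) + δ * ρ ^ 2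

/-- Quantitative domination of the density by the approximate pressure above
the critical value: if moreover `p(R − δ) > 0`, then for every `ρ ≥ R`,
`ρ ≤ (1/p'(R − δ) + R/p(R − δ)) · p_δ(ρ)`. -/
theorem density_dominated_by_pdelta
    (R δ Γ : ℝ) (hR : 0 < R) (hδ0 : 0 < δ) (hδR : δ < R) (hΓ : 2 < Γ)
    (p p' : ℝ → ℝ)
    (hderiv : ∀ ρ ∈ Set.Ico (0 : ℝ) R, HasDerivAt p (p' ρ) ρ)
    (hp'cont : ContinuousOn p' (Set.Ico 0 R))
    (hpnonneg : ∀ ρ ∈ Set.Ioo (0 : ℝ) R, 0 ≤ p ρ)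
    (hp'pos : ∀ ρ ∈ Set.Ioo (0 : ℝ) R, 0 < p' ρ)
    (hppos : 0 < p (R - δ)) :
    ∀ ρ : ℝ, R ≤ ρ →
      ρ ≤ (1 / p' (R - δ) + R / p (R - δ)) * pdelta R δ Γ p p' ρ := by
  intro ρ hρ
  have hb : 0 < p' (R - δ) := hp'pos _ ⟨by linarith, by linarith⟩
  have ht : 0 < ρ - R + δ := by linarith
  have hpow : 0 ≤ (ρ - R + δ) ^ Γ := Real.rpow_nonneg ht.le _
  have hsq : 0 ≤ δ * ρ ^ 2 := by positivity
  have hbt : 0 < p' (R - δ) * (ρ - R + δ) := mul_pos hb ht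
  have hP : pdelta R δ Γ p p' ρ = (ρ - R + δ) ^ Γ + p (R - δ)
      + p' (R - δ) * (ρ - R + δ) + δ * ρ ^ 2 := by
    unfold pdelta
    rw [if_neg (by linarith)]
  have h1 : p' (R - δ) * (ρ - R + δ) ≤ pdelta R δ Γ p p' ρ := by rw [hP]; linarith
  have h2 : p (R - δ) ≤ pdelta R δ Γ p p' ρ := by rw [hP]; linarith
  have h3 : ρ - R + δ ≤ 1 / p' (R - δ) * pdelta R δ Γ p p' ρ := by
    rw [one_div_mul_eq_div, le_div_iff₀ hb]
    linarith
  have h4 : R ≤ R / p (R - δ) * pdelta R δ Γ p p' ρ := by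
    rw [div_mul_eq_mul_div, le_div_iff₀ hppos]
    exact mul_le_mul_of_nonneg_left h2 hR.le
  rw [add_mul]
  linarith
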